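/- arXiv:1807.08899 — 2 statements merged into one kernel-verified Lean document; each statement's English description precedes it below -/
import Mathlib

section
/- Let f₁, f₂, …, f_k ∈ ℤ[x] be irreducible polynomials, no two of which are associates, and let f = f₁f₂⋯f_k. Suppose that f does not vanish identically modulo any prime (i.e., for every prime p there is an integer n with p ∤ f(n)). For each prime p let ω_f(p) be the number of solutions in ℤ/pℤ of f(x) ≡ 0 (mod p). Then the infinite product over all primes p of (1 − 1/p)^{−k} · (1 − ω_f(p)/p) converges; that is, the partial products over primes p ≤ N tend to a finite positive limit as N → ∞. -/
open Filter

section Approx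
open Polynomial MeasureTheory

theorem approx_aux (τ : ℝ) (h0 : 0 < τ) (h1 : τ < 1) (δ : ℝ) (hδ : 0 < δ) :
    ∃ P₁ P₂ : ℝ[X], (∀ t ∈ Set.Icc (0:ℝ) 1,
      t + t * (1 - t) * P₁.eval t ≤ (if τ ≤ t then 1 else 0) ∧
      (if τ ≤ t then (1:ℝ) else 0) ≤ t + t * (1 - t) * P₂.eval t) ∧
      (∀ t ∈ Set.Icc (0:ℝ) 1, 0 ≤ (P₂ - P₁).eval t) ∧
      ∫ t in (0:ℝ)..1, (P₂ - P₁).eval t ≤ δ := by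
  let A : ℝ → ℝ := fun t => -(1 - min t τ)⁻¹
  let B : ℝ → ℝ := fun t => (max t τ)⁻¹
  have hA : Continuous A := by
    refine (Continuous.inv₀ (by fun_prop) fun t => ?_).neg
    have := min_le_right t τ
    linarith
  have hB : Continuous B := by
    refine Continuous.inv₀ (by fun_prop) fun t => ?_
    have := le_max_right t τ
    linarith
  let M : ℝ := (1 - τ)⁻¹ + τ⁻¹
  have hM : 0 < M := by
    have : 0 < 1 - τ := by linarith
    positivity
  have hBA : ∀ t, 0 ≤ B t - A t ∧ B t - A t ≤ M := by
    intro t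
    have e1 : 0 < 1 - τ := by linarith
    have h2 : 1 - τ ≤ 1 - min t τ := by linarith [min_le_right t τ]
    have h3 : τ ≤ max t τ := le_max_right t τ
    have h4 := inv_anti₀ e1 h2
    have h5 := inv_anti₀ h0 h3
    have h6 : 0 ≤ (1 - min t τ)⁻¹ := inv_nonneg.2 (by linarith)
    have h7 : 0 ≤ (max t τ)⁻¹ := inv_nonneg.2 (by linarith)
    simp only [A, B, M]
    constructor <;> linarith
  let η : ℝ := δ / (8 * M)
  have hη : 0 < η := by positivity
  let χp : ℝ → ℝ := fun t => max 0 (min 1 ((t - (τ - η)) / η))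
  let χm : ℝ → ℝ := fun t => max 0 (min 1 ((t - τ) / η))
  have hχp : Continuous χp := by fun_prop
  have hχm : Continuous χm := by fun_prop
  let G₁ : ℝ → ℝ := fun t => A t + (B t - A t) * χm t
  let G₂ : ℝ → ℝ := fun t => A t + (B t - A t) * χp t
  have hG₁ : Continuous G₁ := by fun_prop
  have hG₂ : Continuous G₂ := by fun_prop
  have hm : ∀ t, χm t ≤ if τ ≤ t then 1 else 0 := by
    intro t
    split_ifs with h
    · simp [χm]
    · have : (t - τ) / η ≤ 0 := div_nonpos_of_nonpos_of_nonneg (by linarith) hη.le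
      simp [χm, this]
  have hp : ∀ t, (if τ ≤ t then 1 else 0) ≤ χp t := by
    intro t
    split_ifs with h
    · have : 1 ≤ (t - (τ - η)) / η := by rw [le_div_iff₀ hη]; linarith
      simp [χp, this]
    · simp [χp]
  have hpm : ∀ t, χp t - χm t ≤ (Set.Icc (τ - η) (τ + η)).indicator (fun _ => (1:ℝ)) t := by
    intro t
    have u1 : χp t ≤ 1 := by simp [χp]
    have u2 : 0 ≤ χm t := by simp [χm]
    by_cases h : t ∈ Set.Icc (τ - η) (τ + η)
    · rw [Set.indicator_of_mem h]; linarith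
    · rw [Set.indicator_of_notMem h]
      rw [Set.mem_Icc, not_and_or, not_le, not_le] at h
      rcases h with h | h
      · have : (t - (τ - η)) / η ≤ 0 := div_nonpos_of_nonpos_of_nonneg (by linarith) hη.le
        have : χp t = 0 := by simp [χp, this]
        linarith
      · have : 1 ≤ (t - τ) / η := by rw [le_div_iff₀ hη]; linarith
        have : χm t = 1 := by simp [χm, this]
        linarith
  have hcst : ∫ t in (0:ℝ)..1, (G₂ t - G₁ t) ≤ M * (2 * η) := by
    have hii : Integrable ((Set.Icc (τ - η) (τ + η)).indicator (fun _ => (1:ℝ))) :=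
      (integrable_indicator_iff measurableSet_Icc).2 (by simp)
    calc ∫ t in (0:ℝ)..1, (G₂ t - G₁ t)
        ≤ ∫ t in (0:ℝ)..1, M * (Set.Icc (τ - η) (τ + η)).indicator (fun _ => (1:ℝ)) t := by
          apply intervalIntegral.integral_mono_on zero_le_one
          · exact (hG₂.sub hG₁).intervalIntegrable _ _
          · exact (hii.const_mul M).intervalIntegrable
          · intro t _
            have e : G₂ t - G₁ t = (B t - A t) * (χp t - χm t) := by simp only [G₁, G₂]; ring
            rw [e]
            have q : 0 ≤ χp t - χm t := by linarith [hm t, hp t]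
            calc _ ≤ M * (χp t - χm t) := mul_le_mul_of_nonneg_right (hBA t).2 q
              _ ≤ _ := mul_le_mul_of_nonneg_left (hpm t) hM.le
      _ = M * ∫ t in (0:ℝ)..1, (Set.Icc (τ - η) (τ + η)).indicator (fun _ => (1:ℝ)) t := by
          rw [intervalIntegral.integral_const_mul]
      _ ≤ M * (2 * η) := by
          apply mul_le_mul_of_nonneg_left _ hM.le
          rw [intervalIntegral.integral_of_le zero_le_one]
          refine (setIntegral_le_integral hii (Eventually.of_forall fun t => ?_)).trans ?_
          · exact Set.indicator_nonneg (fun _ _ => zero_le_one) t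
          · rw [integral_indicator measurableSet_Icc]
            simp [hη.le]
            linarith
  have hMη : M * (2 * η) = δ / 4 := by simp only [η]; field_simp; norm_num
  obtain ⟨P₁, hP₁⟩ := exists_polynomial_near_of_continuousOn 0 1 (fun t => G₁ t - δ / 8)
    (by fun_prop) (δ / 8) (by positivity)
  obtain ⟨P₂, hP₂⟩ := exists_polynomial_near_of_continuousOn 0 1 (fun t => G₂ t + δ / 8)
    (by fun_prop) (δ / 8) (by positivity)
  have k1 : ∀ t ∈ Set.Icc (0:ℝ) 1, P₁.eval t ≤ G₁ t ∧ G₁ t ≤ P₁.eval t + δ / 4 := by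
    intro t ht
    have := abs_lt.1 (hP₁ t ht)
    constructor <;> linarith [this.1, this.2]
  have k2 : ∀ t ∈ Set.Icc (0:ℝ) 1, G₂ t ≤ P₂.eval t ∧ P₂.eval t ≤ G₂ t + δ / 4 := by
    intro t ht
    have := abs_lt.1 (hP₂ t ht)
    constructor <;> linarith [this.1, this.2]
  have hG : ∀ t ∈ Set.Icc (0:ℝ) 1, (if τ ≤ t then (1:ℝ) else 0) = t + t * (1 - t) *
      (A t + (B t - A t) * (if τ ≤ t then 1 else 0)) := by
    intro t ht
    split_ifs with h
    · have : t ≠ 0 := by linarith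
      simp only [B, max_eq_left h]
      field_simp
      ring
    · have h' : t ≤ τ := by linarith
      have : 1 - t ≠ 0 := by linarith
      simp only [A, min_eq_left h']
      field_simp
      ring
  refine ⟨P₁, P₂, fun t ht => ?_, fun t ht => ?_, ?_⟩
  · rw [hG t ht]
    have q : 0 ≤ t * (1 - t) := mul_nonneg ht.1 (by linarith [ht.2])
    constructor
    · gcongr
      refine (k1 t ht).1.trans ?_
      simp only [G₁]
      gcongr
      · exact (hBA t).1
      · exact hm t
    · gcongr
      refine le_trans ?_ (k2 t ht).1
      simp only [G₂]
      gcongr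
      · exact (hBA t).1
      · exact hp t
  · have : G₁ t ≤ G₂ t := by
      simp only [G₁, G₂]
      gcongr
      · exact (hBA t).1
      · exact (hm t).trans (hp t)
    rw [eval_sub]; linarith [(k1 t ht).1, (k2 t ht).1]
  · calc ∫ t in (0:ℝ)..1, (P₂ - P₁).eval t ≤ ∫ t in (0:ℝ)..1, ((G₂ t - G₁ t) + δ / 2) := by
          apply intervalIntegral.integral_mono_on zero_le_one
          · exact (P₂ - P₁).continuous.intervalIntegrable _ _
          · exact ((hG₂.sub hG₁).add continuous_const).intervalIntegrable _ _
          · intro t ht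
            rw [eval_sub]; linarith [(k1 t ht).2, (k2 t ht).2]
      _ ≤ δ := by
          rw [intervalIntegral.integral_add (f := fun t => G₂ t - G₁ t)
            ((hG₂.sub hG₁).intervalIntegrable _ _) (by simp)]
          simp; linarith

noncomputable def lam (R : ℝ[X]) : ℝ := R.sum fun k a => a * Real.log ((k + 2) / (k + 1))

theorem lam_le (R : ℝ[X]) (hR : ∀ t ∈ Set.Icc (0:ℝ) 1, 0 ≤ R.eval t) :
    lam R ≤ ∫ t in (0:ℝ)..1, R.eval t := by
  have h1 : ∀ k : ℕ, Real.log (((k:ℝ) + 2) / (k + 1)) = ∫ u in (0:ℝ)..1, ((k:ℝ) + 1 + u)⁻¹ := by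
    intro k
    have := intervalIntegral.integral_comp_add_left (a := 0) (b := 1) (fun x : ℝ => x⁻¹) ((k:ℝ)+1)
    rw [this, integral_inv_of_pos (by positivity) (by positivity)]
    congr 2 <;> ring
  have hii : ∀ k : ℕ, IntervalIntegrable (fun u : ℝ => ((k:ℝ) + 1 + u)⁻¹) volume 0 1 := by
    intro k
    apply ContinuousOn.intervalIntegrable
    apply ContinuousOn.inv₀ (by fun_prop)
    intro u hu
    rw [Set.uIcc_of_le zero_le_one] at hu
    have := hu.1
    positivity
  have h2 : lam R = ∫ u in (0:ℝ)..1, R.sum fun k a => a * ((k:ℝ) + 1 + u)⁻¹ := by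
    simp only [lam, Polynomial.sum]
    rw [intervalIntegral.integral_finsetSum]
    · simp_rw [intervalIntegral.integral_const_mul, h1]
    · intro k _
      exact (hii k).const_mul _
  rw [h2]
  calc _ ≤ ∫ u in (0:ℝ)..1, (∫ t in (0:ℝ)..1, R.eval t) := by
        apply intervalIntegral.integral_mono_on zero_le_one
        · simp only [Polynomial.sum]
          have h3 : (fun u : ℝ => ∑ k ∈ R.support, R.coeff k * ((k:ℝ) + 1 + u)⁻¹) =
              ∑ k ∈ R.support, fun u : ℝ => R.coeff k * ((k:ℝ) + 1 + u)⁻¹ := by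
            ext; simp
          rw [h3]
          exact IntervalIntegrable.sum R.support (fun k _ => (hii k).const_mul _)
        · simp
        · intro u hu
          have e : (R.sum fun k a => a * ((k:ℝ) + 1 + u)⁻¹) =
              ∫ t in (0:ℝ)..1, t ^ u * R.eval t := by
            have e1 : ∀ t ∈ Set.uIcc (0:ℝ) 1, t ^ u * R.eval t =
                ∑ k ∈ R.support, R.coeff k * t ^ ((k:ℝ) + u) := by
              intro t ht
              rw [Set.uIcc_of_le zero_le_one] at ht
              rw [eval_eq_sum, Polynomial.sum, Finset.mul_sum]
              refine Finset.sum_congr rfl fun k _ => ?_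
              rw [Real.rpow_add_of_nonneg ht.1 (by positivity) hu.1, Real.rpow_natCast]
              ring
            rw [intervalIntegral.integral_congr e1, intervalIntegral.integral_finsetSum]
            · rw [Polynomial.sum]
              refine Finset.sum_congr rfl fun k _ => ?_
              have := hu.1
              have hk : (0:ℝ) ≤ k := by positivity
              rw [intervalIntegral.integral_const_mul, integral_rpow (Or.inl (by linarith)),
                Real.one_rpow, Real.zero_rpow (by linarith)]
              rw [sub_zero, one_div]; congr 2; ring
            · intro k _
              have hk : (0:ℝ) ≤ k := by positivity
              exact (intervalIntegral.intervalIntegrable_rpow' (by linarith [hu.1])).const_mul _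
          rw [e]
          apply intervalIntegral.integral_mono_on zero_le_one
          · exact ((Real.continuous_rpow_const hu.1).mul R.continuous).intervalIntegrable _ _
          · exact R.continuous.intervalIntegrable _ _
          · intro t ht
            have := Real.rpow_le_one ht.1 ht.2 hu.1
            nlinarith [hR t ht]
    _ = _ := by simp
end Approx

section Karamata
open Polynomial Topology

theorem rpow_mem (n : ℕ) (hn : n ≠ 0) (ε : ℝ) (hε : 0 < ε) :
    (n:ℝ) ^ (-ε) ∈ Set.Icc (0:ℝ) 1 := by
  refine ⟨by positivity, Real.rpow_le_one_of_one_le_of_nonpos ?_ (by linarith)⟩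
  exact_mod_cast Nat.one_le_iff_ne_zero.2 hn

theorem mono_term (n : ℕ) (hn : n ≠ 0) (ε : ℝ) (k : ℕ) :
    (n:ℝ) ^ (-ε) * (1 - (n:ℝ) ^ (-ε)) * ((n:ℝ) ^ (-ε)) ^ k =
      (n:ℝ) ^ (-((k + 1 : ℝ) * ε)) - (n:ℝ) ^ (-((k + 2 : ℝ) * ε)) := by
  have hn' : (0:ℝ) ≤ n := by positivity
  have h1 : (n:ℝ) ^ (-((k + 1 : ℝ) * ε)) = ((n:ℝ) ^ (-ε)) ^ (k + 1) := by
    rw [← Real.rpow_natCast, ← Real.rpow_mul hn']; congr 1; push_cast; ring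
  have h2 : (n:ℝ) ^ (-((k + 2 : ℝ) * ε)) = ((n:ℝ) ^ (-ε)) ^ (k + 2) := by
    rw [← Real.rpow_natCast, ← Real.rpow_mul hn']; congr 1; push_cast; ring
  rw [h1, h2]; ring

/-- Abstract limit of polynomial sums. -/
theorem poly_hasSum (w : ℕ → ℝ) (h0 : w 0 = 0)
    (hsum : ∀ ε : ℝ, 0 < ε → Summable fun n : ℕ => w n * (n:ℝ) ^ (-ε)) (R : ℝ[X])
    (ε : ℝ) (hε : 0 < ε) :
    HasSum (fun n : ℕ => w n * ((n:ℝ) ^ (-ε) * (1 - (n:ℝ) ^ (-ε)) * R.eval ((n:ℝ) ^ (-ε))))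
      (R.sum fun k a => a * ((∑' n : ℕ, w n * (n:ℝ) ^ (-((k + 1 : ℝ) * ε)))
        - ∑' n : ℕ, w n * (n:ℝ) ^ (-((k + 2 : ℝ) * ε)))) := by
  have h1 : ∀ k ∈ R.support, HasSum (fun n : ℕ => R.coeff k * (w n * (n:ℝ) ^ (-((k + 1 : ℝ) * ε))
      - w n * (n:ℝ) ^ (-((k + 2 : ℝ) * ε))))
      (R.coeff k * ((∑' n : ℕ, w n * (n:ℝ) ^ (-((k + 1 : ℝ) * ε)))
        - ∑' n : ℕ, w n * (n:ℝ) ^ (-((k + 2 : ℝ) * ε)))) := by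
    intro k _
    exact ((hsum _ (by positivity)).hasSum.sub (hsum _ (by positivity)).hasSum).mul_left _
  have h2 := hasSum_sum h1
  rw [Polynomial.sum]
  convert h2 using 1
  ext n
  by_cases hn : n = 0
  · subst hn; simp [h0]
  · rw [eval_eq_sum, Polynomial.sum, Finset.mul_sum, Finset.mul_sum]
    refine Finset.sum_congr rfl fun k _ => ?_
    rw [← mul_sub, ← mono_term n hn]
    ring

theorem tendsto_scale (a : ℝ) (ha : 0 < a) :
    Tendsto (fun ε : ℝ => a * ε) (𝓝[>] 0) (𝓝[>] 0) := by
  refine tendsto_nhdsWithin_iff.2 ⟨?_, ?_⟩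
  · have : Tendsto (fun ε : ℝ => a * ε) (𝓝 0) (𝓝 (a * 0)) := by
      exact tendsto_id.const_mul a
    rw [mul_zero] at this
    exact this.mono_left nhdsWithin_le_nhds
  · filter_upwards [self_mem_nhdsWithin] with ε hε
    exact mul_pos ha hε

theorem karamata (w c : ℕ → ℝ) (C z L : ℝ) (hw : ∀ n, 0 ≤ w n) (h0 : w 0 = 0)
    (hc : ∀ n, |c n| ≤ C * w n)
    (hsum : ∀ ε : ℝ, 0 < ε → Summable fun n : ℕ => w n * (n:ℝ) ^ (-ε))
    (hZ : Tendsto (fun ε : ℝ => (∑' n : ℕ, w n * (n:ℝ) ^ (-ε)) + Real.log ε) (𝓝[>] 0) (𝓝 z))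
    (hD : Tendsto (fun ε : ℝ => ∑' n : ℕ, c n * (n:ℝ) ^ (-ε)) (𝓝[>] 0) (𝓝 L)) :
    Tendsto (fun N : ℕ => ∑ n ∈ Finset.range (N + 1), c n) atTop (𝓝 L) := by
  have hc0 : c 0 = 0 := by
    have := hc 0
    rw [h0, mul_zero] at this
    exact abs_nonpos_iff.1 this
  have hcsum : ∀ ε : ℝ, 0 < ε → Summable fun n : ℕ => c n * (n:ℝ) ^ (-ε) := by
    intro ε hε
    refine Summable.of_norm_bounded ((hsum ε hε).mul_left C) fun n => ?_
    rw [Real.norm_eq_abs, abs_mul, abs_of_nonneg (a := (n:ℝ) ^ (-ε)) (by positivity), ← mul_assoc]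
    exact mul_le_mul_of_nonneg_right (hc n) (by positivity)
  -- limits for polynomials
  have limW : ∀ R : ℝ[X], Tendsto (fun ε : ℝ => ∑' n : ℕ, w n *
      ((n:ℝ) ^ (-ε) * (1 - (n:ℝ) ^ (-ε)) * R.eval ((n:ℝ) ^ (-ε)))) (𝓝[>] 0) (𝓝 (lam R)) := by
    intro R
    have : Tendsto (fun ε : ℝ => R.sum fun k a => a *
        ((∑' n : ℕ, w n * (n:ℝ) ^ (-((k + 1 : ℝ) * ε)))
        - ∑' n : ℕ, w n * (n:ℝ) ^ (-((k + 2 : ℝ) * ε)))) (𝓝[>] 0) (𝓝 (lam R)) := by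
      simp only [Polynomial.sum, lam]
      refine tendsto_finsetSum _ fun k _ => Tendsto.const_mul _ ?_
      have t1 := hZ.comp (tendsto_scale (k + 1) (by positivity))
      have t2 := hZ.comp (tendsto_scale (k + 2) (by positivity))
      have t3 := (t1.sub t2).add_const (Real.log (((k:ℝ) + 2) / (k + 1)))
      rw [sub_self, zero_add] at t3
      refine t3.congr' ?_
      filter_upwards [self_mem_nhdsWithin] with ε (hε : 0 < ε)
      simp only [Function.comp]
      rw [Real.log_mul (by positivity) hε.ne', Real.log_mul (by positivity) hε.ne',
        Real.log_div (by positivity) (by positivity)]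
      ring
    refine this.congr' ?_
    filter_upwards [self_mem_nhdsWithin] with ε (hε : 0 < ε)
    exact (poly_hasSum w h0 hsum R ε hε).tsum_eq.symm
  have limC : ∀ R : ℝ[X], Tendsto (fun ε : ℝ => ∑' n : ℕ, c n *
      ((n:ℝ) ^ (-ε) * (1 - (n:ℝ) ^ (-ε)) * R.eval ((n:ℝ) ^ (-ε)))) (𝓝[>] 0) (𝓝 0) := by
    intro R
    have : Tendsto (fun ε : ℝ => R.sum fun k a => a *
        ((∑' n : ℕ, c n * (n:ℝ) ^ (-((k + 1 : ℝ) * ε)))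
        - ∑' n : ℕ, c n * (n:ℝ) ^ (-((k + 2 : ℝ) * ε)))) (𝓝[>] 0) (𝓝 0) := by
      have e : (0:ℝ) = ∑ k ∈ R.support, R.coeff k * (L - L) := by simp
      simp only [Polynomial.sum]
      suffices h : Tendsto (fun ε : ℝ => ∑ k ∈ R.support, R.coeff k *
        ((∑' n : ℕ, c n * (n:ℝ) ^ (-((k + 1 : ℝ) * ε)))
        - ∑' n : ℕ, c n * (n:ℝ) ^ (-((k + 2 : ℝ) * ε)))) (𝓝[>] 0)
        (𝓝 (∑ k ∈ R.support, R.coeff k * (L - L))) by rwa [← e] at h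
      refine tendsto_finsetSum _ fun k _ => Tendsto.const_mul _ ?_
      exact (hD.comp (tendsto_scale (k + 1) (by positivity))).sub
        (hD.comp (tendsto_scale (k + 2) (by positivity)))
    refine this.congr' ?_
    filter_upwards [self_mem_nhdsWithin] with ε (hε : 0 < ε)
    exact (poly_hasSum c hc0 hcsum R ε hε).tsum_eq.symm
  set τ := Real.exp (-1) with hτ
  have key : Tendsto (fun ε : ℝ => ∑' n : ℕ, c n * (if τ ≤ (n:ℝ) ^ (-ε) then 1 else 0))
      (𝓝[>] 0) (𝓝 L) := by
    rw [Metric.tendsto_nhds]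
    intro δ hδ
    have hC : 0 < |C| + 1 := by positivity
    obtain ⟨P₁, P₂, hP, hpos, hcst⟩ := approx_aux τ (Real.exp_pos _)
      (by rw [hτ, Real.exp_lt_one_iff]; norm_num) (δ / (4 * (|C| + 1))) (by positivity)
    have hl : lam (P₂ - P₁) < δ / (2 * (|C| + 1)) := by
      refine ((lam_le _ hpos).trans hcst).trans_lt ?_
      apply div_lt_div_of_pos_left hδ (by positivity)
      linarith
    have e1 := (limW (P₂ - P₁)).eventually (gt_mem_nhds hl)
    have e2 := (hD.add (limC P₁)).eventually (Metric.ball_mem_nhds _ (half_pos hδ))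
    filter_upwards [e1, e2, self_mem_nhdsWithin] with ε h1 h2 (hε : 0 < ε)
    rw [add_zero] at h2
    have s1 := hcsum ε hε
    have s2 := (poly_hasSum c hc0 hcsum P₁ ε hε).summable
    have s3 := (poly_hasSum w h0 hsum (P₂ - P₁) ε hε).summable
    have bd : ∀ n : ℕ, ‖c n * (if τ ≤ (n:ℝ) ^ (-ε) then 1 else 0) - (c n * (n:ℝ) ^ (-ε) + c n *
        ((n:ℝ) ^ (-ε) * (1 - (n:ℝ) ^ (-ε)) * P₁.eval ((n:ℝ) ^ (-ε))))‖ ≤ (|C| + 1) * (w n *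
        ((n:ℝ) ^ (-ε) * (1 - (n:ℝ) ^ (-ε)) * (P₂ - P₁).eval ((n:ℝ) ^ (-ε)))) := by
      intro n
      by_cases hn : n = 0
      · subst hn; simp [h0, hc0]
      have := hP _ (rpow_mem n hn ε hε)
      set t := (n:ℝ) ^ (-ε)
      rw [← mul_add, ← mul_sub, norm_mul, ← mul_assoc, Real.norm_eq_abs, Real.norm_eq_abs]
      have h5 : |c n| ≤ (|C| + 1) * w n := (hc n).trans
        (mul_le_mul_of_nonneg_right (by linarith [le_abs_self C]) (hw n))
      have h6 : 0 ≤ (if τ ≤ t then (1:ℝ) else 0) - (t + t * (1 - t) * P₁.eval t) := by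
        linarith [this.1]
      rw [eval_sub, abs_of_nonneg h6]
      refine mul_le_mul h5 ?_ h6 (mul_nonneg hC.le (hw n))
      linarith [this.2]
    have s4 := Summable.of_norm_bounded (s3.mul_left (|C| + 1)) bd
    have s5 : Summable fun n : ℕ => c n * (if τ ≤ (n:ℝ) ^ (-ε) then 1 else 0) := by
      have := s4.add (s1.add s2)
      simpa using this
    have b2 := tsum_of_norm_bounded (s3.mul_left (|C| + 1)).hasSum bd
    rw [s5.tsum_sub (s1.add s2), s1.tsum_add s2, tsum_mul_left] at b2
    have b3 : (|C| + 1) * ∑' n : ℕ, w n *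
        ((n:ℝ) ^ (-ε) * (1 - (n:ℝ) ^ (-ε)) * (P₂ - P₁).eval ((n:ℝ) ^ (-ε))) < δ / 2 := by
      have := mul_lt_mul_of_pos_left h1 hC
      refine this.trans_eq ?_
      field_simp
    rw [Real.dist_eq]
    rw [Real.dist_eq] at h2
    rw [Real.norm_eq_abs] at b2
    have b4 := lt_of_le_of_lt b2 b3
    have := abs_add_le ((∑' n : ℕ, c n * (if τ ≤ (n:ℝ) ^ (-ε) then 1 else 0)) -
      ((∑' n : ℕ, c n * (n:ℝ) ^ (-ε)) + ∑' n : ℕ, c n *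
      ((n:ℝ) ^ (-ε) * (1 - (n:ℝ) ^ (-ε)) * P₁.eval ((n:ℝ) ^ (-ε)))))
      (((∑' n : ℕ, c n * (n:ℝ) ^ (-ε)) + ∑' n : ℕ, c n *
      ((n:ℝ) ^ (-ε) * (1 - (n:ℝ) ^ (-ε)) * P₁.eval ((n:ℝ) ^ (-ε)))) - L)
    rw [sub_add_sub_cancel] at this
    linarith
  have lim0 : Tendsto (fun N : ℕ => (Real.log N)⁻¹) atTop (𝓝[>] 0) := by
    refine tendsto_inv_atTop_nhdsGT_zero.comp ?_
    exact Real.tendsto_log_atTop.comp tendsto_natCast_atTop_atTop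
  refine (key.comp lim0).congr' ?_
  filter_upwards [eventually_ge_atTop 2] with N hN
  have hN1 : (1:ℝ) < N := by exact_mod_cast hN
  have hlog : 0 < Real.log N := Real.log_pos hN1
  have iff1 : ∀ n : ℕ, n ≠ 0 → (τ ≤ (n:ℝ) ^ (-(Real.log N)⁻¹) ↔ n ≤ N) := by
    intro n hn
    have hn0 : (0:ℝ) < n := by positivity
    rw [Real.rpow_def_of_pos hn0, hτ, Real.exp_le_exp, mul_neg, neg_le_neg_iff,
      ← div_eq_mul_inv, div_le_one hlog, Real.log_le_log_iff hn0 (by linarith), Nat.cast_le]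
  simp only [Function.comp]
  rw [tsum_eq_sum (s := Finset.range (N + 1))]
  · refine Finset.sum_congr rfl fun n hn => ?_
    by_cases h : n = 0
    · subst h; simp [hc0]
    · rw [if_pos ((iff1 n h).2 (by rw [Finset.mem_range] at hn; omega)), mul_one]
  · intro n hn
    rw [Finset.mem_range] at hn
    rw [if_neg, mul_zero]
    rw [iff1 n (by omega)]; omega
end Karamata

section Euler
open Topology

noncomputable def locT (a : ℕ → ℝ) (p : ℕ) (s : ℝ) : ℝ := ∑' e : ℕ, a (p ^ e) * ((p ^ e : ℕ) : ℝ) ^ (-s)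

noncomputable def locB (d : ℕ) : ℝ := ∑' e : ℕ, ((e:ℝ) + 3) ^ d * (1 / 2) ^ e

theorem summable_shift (d m : ℕ) (r : ℝ) (h0 : 0 ≤ r) (h1 : r < 1) :
    Summable fun e : ℕ => ((e:ℝ) + m) ^ d * r ^ e := by
  have h := summable_pow_mul_geometric_of_norm_lt_one d (r := r) (by rwa [Real.norm_of_nonneg h0])
  rcases h0.eq_or_lt with rfl | hr
  · refine summable_of_ne_finset_zero (s := {0}) fun e he => ?_
    rw [Finset.mem_singleton] at he
    simp [he]
  have h2 := ((summable_nat_add_iff m).2 h).mul_left (r ^ m)⁻¹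
  refine h2.congr fun e => ?_
  push_cast
  rw [pow_add]
  field_simp

theorem term_le (a : ℕ → ℝ) (d : ℕ) (hpow : ∀ p e : ℕ, p.Prime → a (p ^ e) ≤ ((e:ℝ) + 1) ^ d)
    (p : ℕ) (hp : p.Prime) (s : ℝ) (hs : 1 ≤ s) (e : ℕ) :
    a (p ^ e) * ((p ^ e : ℕ) : ℝ) ^ (-s) ≤ ((e:ℝ) + 1) ^ d * (1 / (p:ℝ)) ^ e := by
  have h1 : (1:ℝ) ≤ ((p ^ e : ℕ) : ℝ) := by exact_mod_cast Nat.one_le_pow _ _ hp.pos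
  have h2 : ((p ^ e : ℕ) : ℝ) ^ (-s) ≤ (1 / (p:ℝ)) ^ e := by
    calc ((p ^ e : ℕ) : ℝ) ^ (-s) ≤ ((p ^ e : ℕ) : ℝ) ^ (-1 : ℝ) :=
          Real.rpow_le_rpow_of_exponent_le h1 (by linarith)
      _ = _ := by rw [Real.rpow_neg_one]; push_cast; rw [one_div, inv_pow]
  exact mul_le_mul (hpow p e hp) h2 (by positivity) (by positivity)

theorem loc_facts (a : ℕ → ℝ) (d : ℕ) (ha : ∀ n, 0 ≤ a n) (ha1 : a 1 = 1)
    (hpow : ∀ p e : ℕ, p.Prime → a (p ^ e) ≤ ((e:ℝ) + 1) ^ d)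
    (p : ℕ) (hp : p.Prime) (s : ℝ) (hs : 1 ≤ s) :
    1 ≤ locT a p s ∧ |Real.log (locT a p s) - a p * (p:ℝ) ^ (-s)| ≤
      ((2 ^ d + locB d) ^ 2 + locB d) * (1 / (p:ℝ) ^ 2) := by
  have hp2 : (2:ℝ) ≤ p := by exact_mod_cast hp.two_le
  have hp0 : (0:ℝ) < p := by linarith
  have hple : 1 / (p:ℝ) ≤ 1 / 2 := one_div_le_one_div_of_le (by norm_num) hp2
  have hnn : ∀ e : ℕ, 0 ≤ a (p ^ e) * ((p ^ e : ℕ) : ℝ) ^ (-s) := fun e =>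
    mul_nonneg (ha _) (by positivity)
  have hsum : Summable fun e : ℕ => a (p ^ e) * ((p ^ e : ℕ) : ℝ) ^ (-s) :=
    Summable.of_nonneg_of_le hnn (term_le a d hpow p hp s hs)
      (by simpa using summable_shift d 1 (1 / (p:ℝ)) (by positivity) (by linarith))
  have hdec : locT a p s = 1 + a p * (p:ℝ) ^ (-s) +
      ∑' e : ℕ, a (p ^ (e + 2)) * ((p ^ (e + 2) : ℕ) : ℝ) ^ (-s) := by
    rw [locT, ← hsum.sum_add_tsum_nat_add 2]
    simp [Finset.sum_range_succ, ha1]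
  have hB3 : Summable fun e : ℕ => ((e:ℝ) + 3) ^ d * (1 / 2) ^ e := by
    simpa using summable_shift d 3 (1 / 2) (by norm_num) (by norm_num)
  have hB0 : 0 ≤ locB d := tsum_nonneg fun e => by positivity
  set q := ∑' e : ℕ, a (p ^ (e + 2)) * ((p ^ (e + 2) : ℕ) : ℝ) ^ (-s) with hq
  have hq0 : 0 ≤ q := tsum_nonneg fun e => hnn _
  have hq1 : q ≤ locB d * (1 / (p:ℝ) ^ 2) := by
    rw [hq, locB, ← tsum_mul_right]
    refine ((summable_nat_add_iff 2).2 hsum).tsum_le_tsum (fun e => ?_) (hB3.mul_right _)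
    refine (term_le a d hpow p hp s hs (e + 2)).trans ?_
    rw [pow_add, ← mul_assoc, one_div_pow (p:ℝ) 2]
    apply mul_le_mul_of_nonneg_right _ (by positivity)
    have : ((e + 2 : ℕ) : ℝ) + 1 = (e:ℝ) + 3 := by push_cast; ring
    rw [this]
    apply mul_le_mul_of_nonneg_left _ (by positivity)
    exact pow_le_pow_left₀ (by positivity) hple e
  have hm0 : 0 ≤ a p * (p:ℝ) ^ (-s) := mul_nonneg (ha _) (by positivity)
  have hm1 : a p * (p:ℝ) ^ (-s) ≤ 2 ^ d * (1 / (p:ℝ)) := by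
    have := term_le a d hpow p hp s hs 1
    simp only [pow_one, Nat.cast_one] at this
    norm_num at this ⊢
    exact this
  set m := a p * (p:ℝ) ^ (-s) with hm
  have hinv : 1 / (p:ℝ) ^ 2 ≤ 1 / (p:ℝ) := one_div_le_one_div_of_le hp0 (by nlinarith)
  have hx : m + q ≤ (2 ^ d + locB d) * (1 / (p:ℝ)) := by
    have := mul_le_mul_of_nonneg_left hinv hB0
    linarith
  have hT : locT a p s = 1 + (m + q) := by rw [hdec]; ring
  have hx0 : 0 ≤ m + q := by positivity
  refine ⟨by linarith, ?_⟩
  rw [hT]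
  have l1 : Real.log (1 + (m + q)) ≤ m + q := by
    have := Real.log_le_sub_one_of_pos (x := 1 + (m + q)) (by linarith)
    linarith
  have l2 : (m + q) - (m + q) ^ 2 ≤ Real.log (1 + (m + q)) := by
    have := Real.one_sub_inv_le_log_of_pos (x := 1 + (m + q)) (by linarith)
    refine le_trans ?_ this
    have h3 : 1 - (1 + (m + q))⁻¹ = (m + q) / (1 + (m + q)) := by field_simp; ring
    rw [h3, le_div_iff₀ (by linarith)]
    nlinarith [pow_nonneg hx0 3]
  have hx2 : (m + q) ^ 2 ≤ (2 ^ d + locB d) ^ 2 * (1 / (p:ℝ) ^ 2) := by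
    have := pow_le_pow_left₀ hx0 hx 2
    rwa [mul_pow, one_div_pow] at this
  have h5 : 0 ≤ (2 ^ d + locB d) ^ 2 * (1 / (p:ℝ) ^ 2) := by positivity
  rw [abs_le]
  constructor <;> linarith

theorem locT_tendsto (a : ℕ → ℝ) (d : ℕ) (ha : ∀ n, 0 ≤ a n)
    (hpow : ∀ p e : ℕ, p.Prime → a (p ^ e) ≤ ((e:ℝ) + 1) ^ d)
    (p : ℕ) (hp : p.Prime) : Tendsto (locT a p) (𝓝[>] 1) (𝓝 (locT a p 1)) := by
  have hp2 : (2:ℝ) ≤ p := by exact_mod_cast hp.two_le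
  have hple : 1 / (p:ℝ) ≤ 1 / 2 := one_div_le_one_div_of_le (by norm_num) hp2
  refine tendsto_tsum_of_dominated_convergence
    (bound := fun e : ℕ => ((e:ℝ) + 1) ^ d * (1 / (p:ℝ)) ^ e)
    (by simpa using summable_shift d 1 (1 / (p:ℝ)) (by positivity) (by linarith)) ?_ ?_
  · intro e
    have h1 : (0:ℝ) < ((p ^ e : ℕ) : ℝ) := by exact_mod_cast Nat.pow_pos hp.pos
    refine Tendsto.const_mul _ ?_
    refine Tendsto.mono_left ?_ nhdsWithin_le_nhds
    exact ((Real.continuous_const_rpow h1.ne').comp continuous_neg).tendsto 1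
  · filter_upwards [self_mem_nhdsWithin] with s (hs : 1 < s) e
    rw [Real.norm_of_nonneg (mul_nonneg (ha _) (by positivity))]
    exact term_le a d hpow p hp s hs.le e

theorem prime_sum_limit (a : ℕ → ℝ) (d : ℕ) (κ : ℝ) (hκ : 0 < κ) (ha : ∀ n, 0 ≤ a n) (ha1 : a 1 = 1)
    (hmul : ∀ m n : ℕ, m.Coprime n → m ≠ 0 → n ≠ 0 → a (m * n) = a m * a n)
    (hpow : ∀ p e : ℕ, p.Prime → a (p ^ e) ≤ ((e:ℝ) + 1) ^ d)
    (hres : Tendsto (fun s : ℝ => ((s:ℂ) - 1) * LSeries (fun n => (a n : ℂ)) s) (𝓝[>] 1)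
      (𝓝 (κ : ℂ))) :
    (∀ ε : ℝ, 0 < ε → Summable fun n : ℕ => (if n.Prime then a n / n else 0) * (n:ℝ) ^ (-ε)) ∧
    ∃ z, Tendsto (fun ε : ℝ => (∑' n : ℕ, (if n.Prime then a n / n else 0) * (n:ℝ) ^ (-ε))
      + Real.log ε) (𝓝[>] 0) (𝓝 z) := by
  have hsummable : ∀ ε : ℝ, 0 < ε →
      Summable fun n : ℕ => (if n.Prime then a n / n else 0) * (n:ℝ) ^ (-ε) := by
    intro ε hε
    have h1 : Summable fun n : ℕ => (2:ℝ) ^ d * (n:ℝ) ^ (-(1 + ε)) :=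
      (Real.summable_nat_rpow.2 (by linarith)).mul_left _
    refine Summable.of_nonneg_of_le (fun n => ?_) (fun n => ?_) h1
    · split_ifs
      · exact mul_nonneg (div_nonneg (ha n) (by positivity)) (by positivity)
      · simp
    · split_ifs with hn
      · have hn0 : (0:ℝ) < n := by exact_mod_cast hn.pos
        rw [neg_add, Real.rpow_add hn0, Real.rpow_neg_one, ← mul_assoc, div_eq_mul_inv]
        have := hpow n 1 hn
        norm_num at this
        gcongr
      · rw [zero_mul]; positivity
  refine ⟨hsummable, ?_⟩
  let Z : ℝ → ℝ := fun s => ∑' n : ℕ, (if n = 0 then 0 else a n * (n:ℝ) ^ (-s))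
  have hterm : ∀ s : ℝ, ∀ n : ℕ, LSeries.term (fun n => (a n : ℂ)) s n =
      (((if n = 0 then 0 else a n * (n:ℝ) ^ (-s)) : ℝ) : ℂ) := by
    intro s n
    rw [LSeries.term_def]
    split_ifs with h
    · simp
    · rw [Complex.ofReal_mul, Complex.ofReal_cpow (by positivity), Complex.ofReal_neg,
        Complex.cpow_neg, div_eq_mul_inv, Complex.ofReal_natCast]
  have hLZ : ∀ s : ℝ, LSeries (fun n => (a n : ℂ)) s = (Z s : ℂ) := by
    intro s
    rw [LSeries, Complex.ofReal_tsum]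
    exact tsum_congr (hterm s)
  have hres' : Tendsto (fun s : ℝ => (s - 1) * Z s) (𝓝[>] 1) (𝓝 κ) := by
    have := (Complex.continuous_re.tendsto (κ : ℂ)).comp hres
    refine this.congr fun s => ?_
    simp only [Function.comp, hLZ]
    rw [← Complex.ofReal_one, ← Complex.ofReal_sub, ← Complex.ofReal_mul, Complex.ofReal_re]
  have hev : ∀ᶠ s : ℝ in 𝓝[>] 1, 0 < (s - 1) * Z s := hres'.eventually (lt_mem_nhds hκ)
  -- remainder
  let r : ℝ → Nat.Primes → ℝ := fun s p => Real.log (locT a p s) - a p * (p:ℝ) ^ (-s)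
  have hbs : Summable fun p : Nat.Primes => ((2 ^ d + locB d) ^ 2 + locB d) * (1 / (p:ℝ) ^ 2) := by
    refine Summable.mul_left _ ?_
    have h := Real.summable_one_div_nat_pow.2 (show 1 < 2 by norm_num)
    exact h.subtype {n : ℕ | n.Prime}
  have hrt : Tendsto (fun s => ∑' p, r s p) (𝓝[>] 1) (𝓝 (∑' p, r 1 p)) := by
    refine tendsto_tsum_of_dominated_convergence hbs (fun p => ?_) ?_
    · have h1 := (loc_facts a d ha ha1 hpow p p.2 1 le_rfl).1
      refine Tendsto.sub ?_ ?_
      · exact (Real.continuousAt_log (by linarith)).tendsto.comp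
          (locT_tendsto a d ha hpow p p.2)
      · refine Tendsto.const_mul _ ?_
        refine Tendsto.mono_left ?_ nhdsWithin_le_nhds
        have hp : (p:ℝ) ≠ 0 := by exact_mod_cast p.2.ne_zero
        exact ((Real.continuous_const_rpow hp).comp continuous_neg).tendsto 1
    · filter_upwards [self_mem_nhdsWithin] with s (hs : 1 < s) p
      exact (loc_facts a d ha ha1 hpow p p.2 s hs.le).2
  have hmain : ∀ᶠ s : ℝ in 𝓝[>] 1, (∑' n : ℕ, (if n.Prime then a n / n else 0) * (n:ℝ) ^ (-(s - 1)))
      + Real.log (s - 1) = Real.log ((s - 1) * Z s) - ∑' p, r s p := by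
    filter_upwards [hev, self_mem_nhdsWithin] with s hs (hs1 : 1 < s)
    have hZ : 0 < Z s := by
      by_contra hcon
      nlinarith
    have hsm : Summable (fun n : ℕ => (if n = 0 then 0 else a n * (n:ℝ) ^ (-s))) := by
      by_contra hcon
      have : Z s = 0 := tsum_eq_zero_of_not_summable hcon
      linarith
    have hprod : HasProd (fun p : Nat.Primes => locT a p s) (Z s) := by
      have := EulerProduct.eulerProduct_hasProd
        (f := fun n : ℕ => (if n = 0 then 0 else a n * (n:ℝ) ^ (-s))) (by simp [ha1])
        (by
          intro m n hmn
          by_cases hm : m = 0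
          · simp [hm]
          by_cases hn : n = 0
          · simp [hn]
          simp only [mul_eq_zero, hm, hn, or_self, if_false]
          rw [hmul m n hmn hm hn, Nat.cast_mul, Real.mul_rpow (by positivity) (by positivity)]
          ring)
        hsm.norm (by simp)
      refine this.congr fun S => Finset.prod_congr rfl fun p _ => ?_
      simp [locT, p.2.ne_zero]
    have hlog : HasSum (fun p : Nat.Primes => Real.log (locT a p s)) (Real.log (Z s)) := by
      have := (Real.continuousAt_log hZ.ne').tendsto.comp hprod
      refine this.congr fun S => ?_
      simp only [Function.comp]
      rw [Real.log_prod]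
      intro p _
      have h1 := (loc_facts a d ha ha1 hpow p p.2 s hs1.le).1
      linarith
    have hrs : Summable (r s) := Summable.of_norm_bounded hbs fun p =>
      (loc_facts a d ha ha1 hpow p p.2 s hs1.le).2
    have e1 : ∑' n : ℕ, (if n.Prime then a n / n else 0) * (n:ℝ) ^ (-(s - 1)) =
        ∑' p : Nat.Primes, a p * (p:ℝ) ^ (-s) := by
      have e2 := tsum_subtype {n : ℕ | n.Prime} (fun n : ℕ => a n * (n:ℝ) ^ (-s))
      refine Eq.trans ?_ e2.symm
      refine tsum_congr fun n => ?_
      by_cases hn : n.Prime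
      · rw [if_pos hn, Set.indicator_of_mem (by exact hn)]
        have hn0 : (0:ℝ) < n := by exact_mod_cast hn.pos
        rw [show -s = -1 + -(s - 1) by ring, Real.rpow_add hn0, Real.rpow_neg_one]
        ring_nf
      · rw [if_neg hn, Set.indicator_of_notMem (by exact hn), zero_mul]
    have e3 : ∑' p : Nat.Primes, a p * (p:ℝ) ^ (-s) = Real.log (Z s) - ∑' p, r s p := by
      rw [← hlog.tsum_eq, ← hlog.summable.tsum_sub hrs]
      simp [r]
    rw [e1, e3, Real.log_mul (by linarith) hZ.ne']
    ring
  refine ⟨Real.log κ - ∑' p, r 1 p, ?_⟩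
  have hfin := (((Real.continuousAt_log hκ.ne').tendsto.comp hres').sub hrt).congr'
    (hmain.mono fun s hs => hs.symm)
  have hshift : Tendsto (fun ε : ℝ => 1 + ε) (𝓝[>] 0) (𝓝[>] 1) := by
    refine tendsto_nhdsWithin_iff.2 ⟨?_, ?_⟩
    · have : Tendsto (fun ε : ℝ => 1 + ε) (𝓝 0) (𝓝 (1 + 0)) := tendsto_id.const_add 1
      rw [add_zero] at this
      exact this.mono_left nhdsWithin_le_nhds
    · filter_upwards [self_mem_nhdsWithin] with ε (hε : 0 < ε)
      simpa using hε
  refine (hfin.comp hshift).congr fun ε => ?_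
  simp only [Function.comp, add_sub_cancel_left]
end Euler

section IdealCount
open NumberField Ideal UniqueFactorizationMonoid

variable (K : Type*) [Field K] [NumberField K]

theorem sup_span_top {m n : ℕ} (h : m.Coprime n) :
    (span {(m : 𝓞 K)} ⊔ span {(n : 𝓞 K)} : Ideal (𝓞 K)) = ⊤ := by
  rw [Ideal.eq_top_iff_one]
  have hb := Nat.gcd_eq_gcd_ab m n
  rw [h] at hb
  have hb' : (1 : 𝓞 K) = (m : 𝓞 K) * (m.gcdA n : 𝓞 K) + (n : 𝓞 K) * (m.gcdB n : 𝓞 K) := by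
    exact_mod_cast congrArg (Int.cast : ℤ → 𝓞 K) hb
  rw [hb']
  exact Submodule.add_mem_sup (Ideal.mul_mem_right _ _ (mem_span_singleton_self _))
    (Ideal.mul_mem_right _ _ (mem_span_singleton_self _))

theorem sup_top_of_mem {m n : ℕ} (h : m.Coprime n) (J : Ideal (𝓞 K)) (hJ : (n : 𝓞 K) ∈ J) :
    J ⊔ span {(m : 𝓞 K)} = ⊤ := by
  rw [eq_top_iff, ← sup_span_top K h, sup_le_iff]
  exact ⟨le_sup_right, ((span_singleton_le_iff_mem _).2 hJ).trans le_sup_left⟩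

theorem mul_sup_eq {m n : ℕ} (h : m.Coprime n) (I J : Ideal (𝓞 K)) (hI : (m : 𝓞 K) ∈ I)
    (hJ : (n : 𝓞 K) ∈ J) : I * J ⊔ span {(m : 𝓞 K)} = I := by
  apply le_antisymm
  · exact sup_le Ideal.mul_le_left ((span_singleton_le_iff_mem _).2 hI)
  · calc I = I * (J ⊔ span {(m : 𝓞 K)}) := by rw [sup_top_of_mem K h J hJ, Ideal.mul_top]
      _ = I * J ⊔ I * span {(m : 𝓞 K)} := Ideal.mul_sup _ _ _
      _ ≤ _ := sup_le_sup_left Ideal.mul_le_right _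

theorem sup_mul_sup {m n : ℕ} (h : m.Coprime n) (I : Ideal (𝓞 K))
    (hI : ((m * n : ℕ) : 𝓞 K) ∈ I) :
    (I ⊔ span {(m : 𝓞 K)}) * (I ⊔ span {(n : 𝓞 K)}) = I := by
  apply le_antisymm
  · rw [Ideal.sup_mul, Ideal.mul_sup, Ideal.mul_sup, span_singleton_mul_span_singleton]
    refine sup_le (sup_le Ideal.mul_le_left Ideal.mul_le_left)
      (sup_le Ideal.mul_le_right ((span_singleton_le_iff_mem _).2 (by exact_mod_cast hI)))
  · calc I = I * (span {(m : 𝓞 K)} ⊔ span {(n : 𝓞 K)}) := by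
          rw [sup_span_top K h, Ideal.mul_top]
      _ = I * span {(n : 𝓞 K)} ⊔ span {(m : 𝓞 K)} * I := by
          rw [Ideal.mul_sup, sup_comm, Ideal.mul_comm I (span {(m : 𝓞 K)})]
      _ ≤ _ := sup_le (Ideal.mul_mono le_sup_left le_sup_right)
          (Ideal.mul_mono le_sup_right le_sup_left)

theorem norm_sup_coprime {m n : ℕ} (h : m.Coprime n) (I : Ideal (𝓞 K)) :
    (absNorm (I ⊔ span {(m : 𝓞 K)})).Coprime n := by
  have h1 : absNorm (I ⊔ span {(m : 𝓞 K)}) ∣ absNorm (span {(m : 𝓞 K)}) :=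
    absNorm_dvd_absNorm_of_le le_sup_right
  have h2 : absNorm (span {(m : 𝓞 K)}) = m ^ Module.finrank ℤ (𝓞 K) := by
    rw [absNorm_span_singleton]
    have := Algebra.norm_algebraMap_of_basis (RingOfIntegers.basis K) (m : ℤ)
    simp at this
    rw [this, Int.natAbs_pow, Int.natAbs_natCast, Module.finrank_eq_card_basis (RingOfIntegers.basis K)]
  rw [h2] at h1
  exact Nat.Coprime.coprime_dvd_left h1 (Nat.Coprime.pow_left _ h)

noncomputable def idealCount (n : ℕ) : ℕ := Nat.card {I : Ideal (𝓞 K) // absNorm I = n}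

theorem idealCount_mul (m n : ℕ) (h : m.Coprime n) (hm : m ≠ 0) (hn : n ≠ 0) :
    idealCount K (m * n) = idealCount K m * idealCount K n := by
  rw [idealCount, idealCount, idealCount, ← Nat.card_prod]
  symm
  refine Nat.card_congr
    { toFun := fun x => ⟨x.1.1 * x.2.1, by rw [map_mul, x.1.2, x.2.2]⟩
      invFun := fun x => (⟨x.1 ⊔ span {(m : 𝓞 K)}, ?_⟩, ⟨x.1 ⊔ span {(n : 𝓞 K)}, ?_⟩)
      left_inv := ?_
      right_inv := ?_ }
  all_goals try
    obtain ⟨I, hI⟩ := x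
    have hmem : ((m * n : ℕ) : 𝓞 K) ∈ I := hI ▸ absNorm_mem I
    have e := congrArg absNorm (sup_mul_sup K h I hmem)
    rw [map_mul, hI] at e
    have c1 := norm_sup_coprime K h I
    have c2 := norm_sup_coprime K h.symm I
    have d1 : absNorm (I ⊔ span {(m : 𝓞 K)}) ∣ m :=
      c1.dvd_of_dvd_mul_right (e ▸ dvd_mul_right _ _)
    have d2 : absNorm (I ⊔ span {(n : 𝓞 K)}) ∣ n :=
      c2.dvd_of_dvd_mul_left (e ▸ dvd_mul_left _ _)
    have l1 := Nat.le_of_dvd (Nat.pos_of_ne_zero hm) d1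
    have l2 := Nat.le_of_dvd (Nat.pos_of_ne_zero hn) d2
  · by_contra hne
    have : absNorm (I ⊔ span {(m : 𝓞 K)}) < m := lt_of_le_of_ne l1 hne
    have := Nat.mul_lt_mul_of_lt_of_le this l2 (Nat.pos_of_ne_zero hn)
    omega
  · by_contra hne
    have : absNorm (I ⊔ span {(n : 𝓞 K)}) < n := lt_of_le_of_ne l2 hne
    have := Nat.mul_lt_mul_of_le_of_lt l1 this (Nat.pos_of_ne_zero hm)
    omega
  · rintro ⟨⟨I, hI⟩, ⟨J, hJ⟩⟩
    have hI' : (m : 𝓞 K) ∈ I := hI ▸ absNorm_mem I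
    have hJ' : (n : 𝓞 K) ∈ J := hJ ▸ absNorm_mem J
    simp only [Prod.mk.injEq, Subtype.mk.injEq]
    refine ⟨mul_sup_eq K h I J hI' hJ', ?_⟩
    rw [mul_comm]
    exact mul_sup_eq K h.symm J I hJ' hI'
  · rintro ⟨I, hI⟩
    exact Subtype.ext (sup_mul_sup K h I (hI ▸ absNorm_mem I))

theorem idealCount_one : idealCount K 1 = 1 := by
  rw [idealCount]
  simp [absNorm_eq_one_iff]

theorem card_factors_le {p e : ℕ} (hp : p.Prime) (I : Ideal (𝓞 K)) (hI : absNorm I = p ^ e) :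
    Multiset.card (normalizedFactors I) ≤ e := by
  have hI0 : I ≠ 0 := by
    rintro rfl
    simp at hI
    exact (pow_ne_zero e hp.ne_zero) hI.symm
  have h1 : (normalizedFactors I).prod = I := by
    simpa using prod_normalizedFactors_eq hI0
  have h2 : ((normalizedFactors I).map absNorm).prod = p ^ e := by
    rw [Multiset.prod_hom, h1, hI]
  have h3 : p ^ Multiset.card (normalizedFactors I) ∣ ((normalizedFactors I).map absNorm).prod := by
    have : p ^ Multiset.card (normalizedFactors I) =
      ((normalizedFactors I).map (fun _ => p)).prod := by simp
    rw [this]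
    refine Multiset.prod_dvd_prod_of_dvd _ _ fun P hP => ?_
    have hP1 := prime_of_normalized_factor P hP
    have hd : absNorm P ∣ p ^ e := hI ▸ map_dvd absNorm (dvd_of_mem_normalizedFactors hP)
    obtain ⟨k, _, hk⟩ := (Nat.dvd_prime_pow hp).1 hd
    rw [hk]
    refine dvd_pow_self p ?_
    rintro rfl
    rw [pow_zero, absNorm_eq_one_iff] at hk
    exact hP1.not_isUnit (by rw [hk, ← Ideal.one_eq_top]; exact isUnit_one)
  rw [h2] at h3
  exact (Nat.pow_dvd_pow_iff_le_right hp.one_lt).1 h3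

theorem idealCount_pow_le (p e : ℕ) (hp : p.Prime) :
    idealCount K (p ^ e) ≤ (e + 1) ^ Module.finrank ℤ (𝓞 K) := by
  classical
  have h2 : absNorm (span {(p : 𝓞 K)}) = p ^ Module.finrank ℤ (𝓞 K) := by
    rw [absNorm_span_singleton]
    have := Algebra.norm_algebraMap_of_basis (RingOfIntegers.basis K) (p : ℤ)
    simp at this
    rw [this, Int.natAbs_pow, Int.natAbs_natCast, Module.finrank_eq_card_chooseBasisIndex]
  have hp0 : span {(p : 𝓞 K)} ≠ (0 : Ideal (𝓞 K)) := by
    rw [Ne, Submodule.zero_eq_bot, span_singleton_eq_bot]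
    exact_mod_cast hp.ne_zero
  let S := (normalizedFactors (span {(p : 𝓞 K)})).toFinset
  have hS : S.card ≤ Module.finrank ℤ (𝓞 K) :=
    (Multiset.toFinset_card_le _).trans (card_factors_le K hp _ h2)
  have hfac : ∀ I : Ideal (𝓞 K), absNorm I = p ^ e → I ≠ 0 ∧ ∀ P ∈ normalizedFactors I, P ∈ S := by
    intro I hI
    have hI0 : I ≠ 0 := by
      rintro rfl
      simp at hI
      exact (pow_ne_zero e hp.ne_zero) hI.symm
    refine ⟨hI0, fun P hP => ?_⟩
    have hP1 := prime_of_normalized_factor P hP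
    have hPp : P.IsPrime := isPrime_of_prime hP1
    have hle : I ≤ P := Ideal.le_of_dvd (dvd_of_mem_normalizedFactors hP)
    have hmem : ((p ^ e : ℕ) : 𝓞 K) ∈ P := hle (hI ▸ absNorm_mem I)
    rw [Nat.cast_pow] at hmem
    have hmem' := hPp.mem_of_pow_mem _ hmem
    rw [Multiset.mem_toFinset, Ideal.mem_normalizedFactors_iff hp0]
    exact ⟨hPp, (span_singleton_le_iff_mem _).2 hmem'⟩
  let F : {I : Ideal (𝓞 K) // absNorm I = p ^ e} → (S → Fin (e + 1)) := fun I P =>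
    ⟨(normalizedFactors I.1).count P.1, Nat.lt_succ_of_le
      ((Multiset.count_le_card _ _).trans (card_factors_le K hp _ I.2))⟩
  have hF : Function.Injective F := by
    rintro ⟨I, hI⟩ ⟨J, hJ⟩ hIJ
    have hc : normalizedFactors I = normalizedFactors J := by
      ext P
      by_cases hP : P ∈ S
      · have := congrFun hIJ ⟨P, hP⟩
        simpa [F] using this
      · rw [Multiset.count_eq_zero_of_notMem fun h => hP ((hfac I hI).2 P h),
          Multiset.count_eq_zero_of_notMem fun h => hP ((hfac J hJ).2 P h)]
    apply Subtype.ext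
    have h1 : (normalizedFactors I).prod = I := by
      simpa using prod_normalizedFactors_eq (hfac I hI).1
    have h3 : (normalizedFactors J).prod = J := by
      simpa using prod_normalizedFactors_eq (hfac J hJ).1
    change I = J
    rw [← h1, ← h3, hc]
  calc idealCount K (p ^ e) ≤ Nat.card (S → Fin (e + 1)) := Nat.card_le_card_of_injective F hF
    _ = (e + 1) ^ S.card := by simp
    _ ≤ _ := Nat.pow_le_pow_right (by omega) hS

theorem idealCount_limit :
    (∀ ε : ℝ, 0 < ε → Summable fun n : ℕ =>
      (if n.Prime then (idealCount K n : ℝ) / n else 0) * (n:ℝ) ^ (-ε)) ∧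
    ∃ z, Tendsto (fun ε : ℝ => (∑' n : ℕ,
      (if n.Prime then (idealCount K n : ℝ) / n else 0) * (n:ℝ) ^ (-ε))
      + Real.log ε) (nhdsWithin 0 (Set.Ioi 0)) (nhds z) := by
  refine prime_sum_limit (fun n => (idealCount K n : ℝ)) (Module.finrank ℤ (𝓞 K))
    (dedekindZeta_residue K) (dedekindZeta_residue_pos K) (fun n => by positivity)
    (by simp [idealCount_one]) ?_ ?_ ?_
  · intro m n h hm hn
    exact_mod_cast idealCount_mul K m n h hm hn
  · intro p e hp
    exact_mod_cast idealCount_pow_le K p e hp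
  · have := tendsto_sub_one_mul_dedekindZeta_nhdsGT K
    simpa [dedekindZeta, idealCount] using this

theorem zeta_limit :
    (∀ ε : ℝ, 0 < ε → Summable fun n : ℕ =>
      (if n.Prime then (1 : ℝ) / n else 0) * (n:ℝ) ^ (-ε)) ∧
    ∃ z, Tendsto (fun ε : ℝ => (∑' n : ℕ,
      (if n.Prime then (1 : ℝ) / n else 0) * (n:ℝ) ^ (-ε))
      + Real.log ε) (nhdsWithin 0 (Set.Ioi 0)) (nhds z) := by
  refine prime_sum_limit (fun n => (1 : ℝ)) 0 1 one_pos (fun n => by positivity)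
    (by simp) ?_ ?_ ?_
  · simp
  · simp
  · have h1 : Tendsto (fun s : ℝ => (s : ℂ)) (nhdsWithin 1 (Set.Ioi 1)) (nhdsWithin 1 {1}ᶜ) := by
      refine tendsto_nhdsWithin_iff.2 ⟨?_, ?_⟩
      · exact (Complex.continuous_ofReal.tendsto 1).mono_left nhdsWithin_le_nhds
      · filter_upwards [self_mem_nhdsWithin] with s (hs : 1 < s)
        simp only [Set.mem_compl_iff, Set.mem_singleton_iff]
        exact_mod_cast hs.ne'
    have := riemannZeta_residue_one.comp h1
    rw [Complex.ofReal_one]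
    refine this.congr' ?_
    filter_upwards [self_mem_nhdsWithin] with s (hs : 1 < s)
    simp only [Function.comp]
    rw [← LSeries_one_eq_riemannZeta (by simpa using hs)]
    rfl

/-- Key analytic output: partial sums converge. -/
theorem idealCount_sum_converges :
    ∃ L : ℝ, Tendsto (fun N : ℕ => ∑ n ∈ Finset.range (N + 1),
      (if n.Prime then ((idealCount K n : ℝ) - 1) / n else 0)) atTop (nhds L) := by
  obtain ⟨s1, z1, h1⟩ := idealCount_limit K
  obtain ⟨s2, z2, h2⟩ := zeta_limit
  refine ⟨z1 - z2, karamata (fun n => if n.Prime then (1:ℝ) / n else 0) _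
    (2 ^ Module.finrank ℤ (𝓞 K)) z2 _ (fun n => by split_ifs <;> positivity) (by simp) ?_ s2 h2 ?_⟩
  · intro n
    split_ifs with hn
    · have h := idealCount_pow_le K n 1 hn
      rw [pow_one] at h
      have h' : (idealCount K n : ℝ) ≤ 2 ^ Module.finrank ℤ (𝓞 K) := by exact_mod_cast h
      rw [abs_div, abs_of_nonneg (a := (n:ℝ)) (by positivity), div_eq_mul_inv, one_div]
      refine mul_le_mul_of_nonneg_right ?_ (by positivity)
      have h1 : (1:ℝ) ≤ 2 ^ Module.finrank ℤ (𝓞 K) := one_le_pow₀ (by norm_num)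
      have h0 : (0:ℝ) ≤ idealCount K n := by positivity
      rw [abs_le]
      constructor <;> linarith
    · simp
  · refine (h1.sub h2).congr' ?_
    filter_upwards [self_mem_nhdsWithin] with ε (hε : 0 < ε)
    rw [add_sub_add_right_eq_sub, ← (s1 ε hε).tsum_sub (s2 ε hε)]
    refine tsum_congr fun n => ?_
    split_ifs
    · ring
    · ring
end IdealCount

section RootCount
open NumberField Ideal Polynomial

theorem natCard_ringHom_eq (K : Type*) [Field K] [NumberField K] (p : ℕ) [hp : Fact p.Prime] :
    idealCount K p = Nat.card (𝓞 K →+* ZMod p) := by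
  symm
  rw [idealCount]
  have hs : ∀ φ : 𝓞 K →+* ZMod p, Function.Surjective φ := fun φ => ZMod.ringHom_surjective φ
  refine Nat.card_congr (Equiv.ofBijective (fun φ => ⟨RingHom.ker φ, ?_⟩) ⟨?_, ?_⟩)
  · rw [absNorm_apply, Submodule.cardQuot_apply,
      Nat.card_congr (RingHom.quotientKerEquivOfSurjective (hs φ)).toEquiv, Nat.card_zmod]
  · intro φ ψ h
    have h' : RingHom.ker φ = RingHom.ker ψ := congrArg Subtype.val h
    ext x
    obtain ⟨n, hn⟩ := ZMod.natCast_zmod_surjective (φ x)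
    have : x - (n : 𝓞 K) ∈ RingHom.ker φ := by
      rw [RingHom.mem_ker, map_sub, map_natCast, hn, sub_self]
    rw [h', RingHom.mem_ker, map_sub, map_natCast, sub_eq_zero] at this
    rw [this, hn]
  · rintro ⟨I, hI⟩
    have hc : Nat.card (𝓞 K ⧸ I) = p := by
      rw [← hI, absNorm_apply, Submodule.cardQuot_apply]
    have : Finite (𝓞 K ⧸ I) := Nat.finite_of_card_ne_zero (by rw [hc]; exact hp.out.ne_zero)
    have : Fintype (𝓞 K ⧸ I) := Fintype.ofFinite _
    rw [Nat.card_eq_fintype_card] at hc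
    refine ⟨((ZMod.ringEquivOfPrime _ hp.out hc).symm : (𝓞 K ⧸ I) →+* ZMod p).comp
      (Ideal.Quotient.mk I), Subtype.ext ?_⟩
    ext x
    simp [RingHom.mem_ker, Ideal.Quotient.eq_zero_iff_mem]

theorem exists_conductor {K : Type*} [Field K] [NumberField K] (α : K) (c : ℤ) (hc : c ≠ 0)
    (θ : 𝓞 K) (hθ : algebraMap (𝓞 K) K θ = c * α) (hgen : ∀ x : K, ∃ q : ℚ[X], aeval α q = x) :
    ∃ d : ℤ, d ≠ 0 ∧ ∀ b : 𝓞 K, (d : 𝓞 K) * b ∈ Algebra.adjoin ℤ {θ} := by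
  set A := Algebra.adjoin ℤ {θ} with hA
  have hcst : ∀ n : ℤ, (n : 𝓞 K) ∈ A := fun n => A.intCast_mem n
  have key : ∀ q : ℚ[X], ∃ d : ℤ, d ≠ 0 ∧ ∃ a ∈ A, (d : K) * aeval α q = algebraMap (𝓞 K) K a := by
    intro q
    induction q using Polynomial.induction_on' with
    | add q r hq hr =>
      obtain ⟨d, hd, a, ha, h⟩ := hq
      obtain ⟨d', hd', a', ha', h'⟩ := hr
      refine ⟨d * d', mul_ne_zero hd hd', d' * a + d * a',
        A.add_mem (A.mul_mem (hcst _) ha) (A.mul_mem (hcst _) ha'), ?_⟩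
      simp only [map_add, map_mul, map_intCast, ← h, ← h', Int.cast_mul]
      ring
    | monomial n r =>
      refine ⟨r.den * c ^ n, mul_ne_zero (by exact_mod_cast r.den_ne_zero) (pow_ne_zero _ hc),
        r.num * θ ^ n, A.mul_mem (hcst _)
          (A.pow_mem (Algebra.subset_adjoin (Set.mem_singleton _)) _), ?_⟩
      have hr : ((r.den : ℚ) : K) * (r : K) = ((r.num : ℚ) : K) := by
        rw [← Rat.cast_mul, mul_comm, Rat.mul_den_eq_num]
      rw [aeval_monomial]
      push_cast at hr ⊢
      simp only [map_mul, map_pow, map_intCast, hθ, eq_ratCast]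
      rw [← hr]
      ring
  have key2 : ∀ b : 𝓞 K, ∃ d : ℤ, d ≠ 0 ∧ (d : 𝓞 K) * b ∈ A := by
    intro b
    obtain ⟨q, hq⟩ := hgen (algebraMap (𝓞 K) K b)
    obtain ⟨d, hd, a, ha, h⟩ := key q
    refine ⟨d, hd, ?_⟩
    have : (d : 𝓞 K) * b = a := by
      apply RingOfIntegers.coe_injective
      rw [← h, hq, map_mul, map_intCast]
    rwa [this]
  choose D hD hDA using key2
  let B := RingOfIntegers.basis K
  refine ⟨∏ i, D (B i), Finset.prod_ne_zero_iff.2 fun i _ => hD _, fun b => ?_⟩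
  rw [← B.sum_repr b, Finset.mul_sum]
  refine A.sum_mem fun i _ => ?_
  rw [← Finset.mul_prod_erase _ _ (Finset.mem_univ i), zsmul_eq_mul]
  have : ((D (B i) * ∏ j ∈ Finset.univ.erase i, D (B j) : ℤ) : 𝓞 K) * ((B.repr b i : 𝓞 K) * B i)
    = (((∏ j ∈ Finset.univ.erase i, D (B j)) * B.repr b i : ℤ) : 𝓞 K) * ((D (B i) : 𝓞 K) * B i) := by
    push_cast; ring
  rw [this]
  exact A.mul_mem (hcst _) (hDA _)

theorem ringHom_eq_roots {K : Type*} [Field K] [NumberField K] (f : ℤ[X]) (hf : 1 ≤ f.natDegree)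
    (α : K) (hα : aeval α f = 0) (hgen : ∀ x : K, ∃ q : ℚ[X], aeval α q = x)
    (hdvd : ∀ q : ℤ[X], aeval α q = 0 → f ∣ q) :
    ∃ M : ℕ, ∀ p : ℕ, M < p → ∀ _hp : Fact p.Prime,
      Nat.card (𝓞 K →+* ZMod p) =
        Nat.card {x : ZMod p // f.eval₂ (Int.castRingHom (ZMod p)) x = 0} := by
  have hf0 : f ≠ 0 := by rintro rfl; simp at hf
  set c := f.leadingCoeff with hc
  have hc0 : c ≠ 0 := leadingCoeff_ne_zero.2 hf0
  set g := f.integralNormalization with hg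
  have hgm : g.Monic := monic_integralNormalization hf0
  have hgα : aeval (algebraMap ℤ K c * α) g = 0 := 
    integralNormalization_aeval_eq_zero hα (fun x hx => by simpa using hx)
  let θ : 𝓞 K := ⟨algebraMap ℤ K c * α, ⟨g, hgm, hgα⟩⟩
  have hθ : algebraMap (𝓞 K) K θ = c * α := by
    change algebraMap ℤ K c * α = _
    simp
  have hgθ : aeval θ g = 0 := by
    apply RingOfIntegers.coe_injective
    have h := aeval_algebraMap_apply K θ g
    rw [map_zero, ← h]
    exact hgα
  obtain ⟨d, hd, hdA⟩ := exists_conductor α c hc0 θ hθ hgen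
  refine ⟨(c * d).natAbs, fun p hpM hp => ?_⟩
  have hpd : ¬ (p : ℤ) ∣ c * d := by
    intro h
    have := Int.le_of_dvd (abs_pos.2 (mul_ne_zero hc0 hd)) ((dvd_abs _ _).2 h)
    rw [Int.abs_eq_natAbs] at this
    omega
  have hcp : (c : ZMod p) ≠ 0 := by
    rw [Ne, ZMod.intCast_zmod_eq_zero_iff_dvd]
    exact fun h => hpd (h.mul_right _)
  have hdp' : ¬ (p : ℤ) ∣ d := fun h => hpd (h.mul_left _)
  have hdp : (d : ZMod p) ≠ 0 := by
    rwa [Ne, ZMod.intCast_zmod_eq_zero_iff_dvd]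
  have hexp : ¬ p ∣ RingOfIntegers.exponent θ := by
    intro h
    apply hdp'
    have h1 : span {d} ≤ under ℤ (conductor ℤ θ) := by
      rw [span_singleton_le_iff_mem]
      change algebraMap ℤ (𝓞 K) d ∈ conductor ℤ θ
      rw [mem_conductor_iff]
      simpa using hdA
    have h2 := absNorm_dvd_absNorm_of_le h1
    have h3 : absNorm (span {d}) = d.natAbs := by
      simp [absNorm_span_singleton]
    rw [h3] at h2
    exact Int.natCast_dvd.2 (h.trans h2)
  have hroot : ∀ φ : 𝓞 K →+* ZMod p, 
      f.eval₂ (Int.castRingHom (ZMod p)) ((c : ZMod p)⁻¹ * φ θ) = 0 := by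
    intro φ
    have h1 := integralNormalization_eval₂_leadingCoeff_mul hf (Int.castRingHom (ZMod p))
      ((c : ZMod p)⁻¹ * φ θ)
    rw [← hc, ← hg, eq_intCast, mul_inv_cancel_left₀ hcp] at h1
    have h2 : g.eval₂ (Int.castRingHom (ZMod p)) (φ θ) = 0 := by
      have := congrArg φ hgθ
      rw [map_zero, aeval_def, hom_eval₂] at this
      rwa [RingHom.ext_int (φ.comp (algebraMap ℤ (𝓞 K))) (Int.castRingHom (ZMod p))] at this
    rw [h2] at h1
    exact (mul_eq_zero.1 h1.symm).resolve_left (pow_ne_zero _ hcp)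
  refine Nat.card_congr (Equiv.ofBijective (fun φ => ⟨(c : ZMod p)⁻¹ * φ θ, hroot φ⟩) ⟨?_, ?_⟩)
  · intro φ ψ h
    have h' : (c : ZMod p)⁻¹ * φ θ = (c : ZMod p)⁻¹ * ψ θ := congrArg Subtype.val h
    have h1 : φ θ = ψ θ := mul_left_cancel₀ (inv_ne_zero hcp) h'
    have h2 : ∀ a ∈ Algebra.adjoin ℤ {θ}, φ a = ψ a := by
      intro a ha
      induction ha using Algebra.adjoin_induction with
      | mem x hx => rw [Set.mem_singleton_iff.1 hx, h1]
      | algebraMap r => simp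
      | add x y _ _ hx hy => rw [map_add, map_add, hx, hy]
      | mul x y _ _ hx hy => rw [map_mul, map_mul, hx, hy]
    ext b
    have h3 := h2 _ (hdA b)
    rw [map_mul, map_mul, map_intCast, map_intCast] at h3
    exact mul_left_cancel₀ hdp h3
  · rintro ⟨x, hx⟩
    have hm : eval₂ (Int.castRingHom (ZMod p)) ((c : ZMod p) * x) (minpoly ℤ θ) = 0 := by
      have h1 : f ∣ (minpoly ℤ θ).comp (C c * X) := by
        apply hdvd
        rw [aeval_comp]
        have h := aeval_algebraMap_apply K θ (minpoly ℤ θ)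
        rw [minpoly.aeval, map_zero] at h
        convert h using 2
        rw [hθ]
        simp
      obtain ⟨h, hh⟩ := h1
      have := congrArg (eval₂ (Int.castRingHom (ZMod p)) x) hh
      rw [eval₂_mul, hx, zero_mul, eval₂_comp, eval₂_mul, eval₂_C, eval₂_X] at this
      simpa using this
    let ψ₀ : (ZMod p)[X] →+* ZMod p := evalRingHom ((c : ZMod p) * x)
    let ψ : (ZMod p)[X] ⧸ span {map (Int.castRingHom (ZMod p)) (minpoly ℤ θ)} →+* ZMod p :=
      Ideal.Quotient.lift _ ψ₀ (by
        intro a ha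
        obtain ⟨b, rfl⟩ := mem_span_singleton.1 ha
        rw [map_mul]
        have : ψ₀ (map (Int.castRingHom (ZMod p)) (minpoly ℤ θ)) = 0 := by
          change eval _ (map _ _) = 0
          rw [eval_map, hm]
        rw [this, zero_mul])
    let e : (ZMod p)[X] ⧸ span {map (Int.castRingHom (ZMod p)) (minpoly ℤ θ)} ≃+* 𝓞 K ⧸ span {(p : 𝓞 K)} :=
      RingOfIntegers.ZModXQuotSpanEquivQuotSpan hexp
    refine ⟨(ψ.comp e.symm.toRingHom).comp (Ideal.Quotient.mk (span {(p : 𝓞 K)})), Subtype.ext ?_⟩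
    have h1 := RingOfIntegers.ZModXQuotSpanEquivQuotSpan_mk_apply hexp X
    rw [aeval_X] at h1
    have h2 : e.symm (Ideal.Quotient.mk _ θ) = Ideal.Quotient.mk _ X := by
      rw [RingEquiv.symm_apply_eq]
      rw [← h1, map_X]
    have h3 : ((ψ.comp e.symm.toRingHom).comp (Ideal.Quotient.mk (span {(p : 𝓞 K)}))) θ = (c : ZMod p) * x := by
      change ψ (e.symm (Ideal.Quotient.mk _ θ)) = _
      rw [h2]
      change ψ₀ X = _
      simp [ψ₀]
    change (c : ZMod p)⁻¹ * _ = x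
    rw [h3, inv_mul_cancel_left₀ hcp]

theorem card_roots_range (f : ℤ[X]) (p : ℕ) [hp : Fact p.Prime] :
    Nat.card {x : ZMod p // f.eval₂ (Int.castRingHom (ZMod p)) x = 0} =
      ((Finset.range p).filter fun x : ℕ => (p : ℤ) ∣ f.eval (x : ℤ)).card := by
  classical
  rw [Nat.card_eq_fintype_card, Fintype.card_subtype]
  symm
  have key : ∀ x : ℕ, (p : ℤ) ∣ f.eval (x : ℤ) ↔ 
      f.eval₂ (Int.castRingHom (ZMod p)) (x : ZMod p) = 0 := by
    intro x
    rw [← ZMod.intCast_zmod_eq_zero_iff_dvd, ← eq_intCast (Int.castRingHom (ZMod p)),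
      ← eval₂_at_apply]
    simp
  refine Finset.card_bij (fun x _ => (x : ZMod p)) ?_ ?_ ?_
  · intro x hx
    simp only [Finset.mem_filter] at hx
    rw [Finset.mem_filter]
    exact ⟨Finset.mem_univ _, (key x).1 hx.2⟩
  · intro x hx y hy h
    simp only [Finset.mem_filter, Finset.mem_range] at hx hy
    have := congrArg ZMod.val h
    rwa [ZMod.val_cast_of_lt hx.1, ZMod.val_cast_of_lt hy.1] at this
  · intro x hx
    refine ⟨x.val, ?_, by simp⟩
    simp only [Finset.mem_filter, Finset.mem_univ, true_and] at hx
    rw [Finset.mem_filter, key, Finset.mem_range]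
    exact ⟨ZMod.val_lt x, by simpa using hx⟩

theorem aeval_int_eq {K : Type*} [Field K] [Algebra ℚ K] (a : K) (q : ℤ[X]) :
    aeval a q = aeval a (q.map (Int.castRingHom ℚ)) := by
  rw [← algebraMap_int_eq, aeval_map_algebraMap]

theorem exists_field (f : ℤ[X]) (hirr : Irreducible f) (hf : 1 ≤ f.natDegree) :
    ∃ (K : Type) (_ : Field K) (_ : NumberField K) (M : ℕ), ∀ p : ℕ, M < p → p.Prime →
      ((Finset.range p).filter fun x : ℕ => (p : ℤ) ∣ f.eval (x : ℤ)).card = idealCount K p := by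
  have hprim : f.IsPrimitive := hirr.isPrimitive (by omega)
  let F : ℚ[X] := f.map (Int.castRingHom ℚ)
  have hF : Irreducible F := (IsPrimitive.Int.irreducible_iff_irreducible_map_cast hprim).1 hirr
  have : Fact (Irreducible F) := ⟨hF⟩
  have : FiniteDimensional ℚ (AdjoinRoot F) := (AdjoinRoot.powerBasis hF.ne_zero).finite
  have : CharZero (AdjoinRoot F) := algebraRat.charZero _
  have : NumberField (AdjoinRoot F) := { }
  obtain ⟨M, hM⟩ := ringHom_eq_roots (K := AdjoinRoot F) f hf (AdjoinRoot.root F)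
    ((aeval_int_eq _ _).trans ((AdjoinRoot.aeval_eq (f := F) _).trans AdjoinRoot.mk_self))
    (fun x => by
      induction x using AdjoinRoot.induction_on with
      | ih q => exact ⟨q, AdjoinRoot.aeval_eq q⟩)
    (fun q hq => by
      replace hq : AdjoinRoot.mk F (q.map (Int.castRingHom ℚ)) = 0 :=
        (AdjoinRoot.aeval_eq (f := F) _).symm.trans ((aeval_int_eq _ _).symm.trans hq)
      rw [AdjoinRoot.mk_eq_zero] at hq
      exact (IsPrimitive.Int.dvd_iff_map_cast_dvd_map_cast f q hprim).2 hq )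
  refine ⟨AdjoinRoot F, inferInstance, inferInstance, M, fun p hp hpp => ?_⟩
  have : Fact p.Prime := ⟨hpp⟩
  rw [natCard_ringHom_eq, hM p hp ⟨hpp⟩, card_roots_range]

end RootCount

theorem sum_conv_of_eventually_eq (u v : ℕ → ℝ) (M : ℕ) (h : ∀ n, M < n → v n = u n)
    (hu : ∃ L, Tendsto (fun N : ℕ => ∑ n ∈ Finset.range (N + 1), u n) atTop (nhds L)) :
    ∃ L, Tendsto (fun N : ℕ => ∑ n ∈ Finset.range (N + 1), v n) atTop (nhds L) := by
  obtain ⟨L, hL⟩ := hu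
  have h1 : HasSum (fun n => v n - u n) (∑ n ∈ Finset.range (M + 1), (v n - u n)) := by
    apply hasSum_sum_of_ne_finset_zero
    intro n hn
    rw [h n (by simpa using hn), sub_self]
  have h2 := (h1.tendsto_sum_nat.comp (tendsto_add_atTop_nat 1)).add hL
  refine ⟨_, h2.congr fun N => ?_⟩
  simp only [Function.comp_apply, ← Finset.sum_add_distrib]
  exact Finset.sum_congr rfl fun n _ => by ring

theorem log_one_sub_bound {x : ℝ} (h0 : 0 ≤ x) (h1 : x ≤ 1 / 2) :
    |x + Real.log (1 - x)| ≤ 2 * x ^ 2 := by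
  have h := Real.abs_log_sub_add_sum_range_le (x := x) (by rw [abs_of_nonneg h0]; linarith) 1
  simp only [Finset.sum_range_one, abs_of_nonneg h0] at h
  norm_num at h
  refine h.trans ?_
  rw [div_le_iff₀ (by linarith)]
  nlinarith [sq_nonneg x]

theorem product_of_sum (k : ℕ) (ω : ℕ → ℕ) (B M : ℕ) (hlt : ∀ p : ℕ, p.Prime → ω p < p)
    (hb : ∀ p : ℕ, p.Prime → M < p → ω p ≤ B)
    (hconv : ∃ L, Tendsto (fun N : ℕ => ∑ n ∈ Finset.range (N + 1),
      (if n.Prime then ((ω n : ℝ) - k) / n else 0)) atTop (nhds L)) :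
    ∃ L : ℝ, 0 < L ∧ Tendsto (fun N : ℕ => ∏ p ∈ (Finset.range (N + 1)).filter Nat.Prime,
      ((1 - 1 / (p : ℝ))⁻¹ ^ k * (1 - (ω p : ℝ) / p))) atTop (nhds L) := by
  obtain ⟨L, hL⟩ := hconv
  let r : ℕ → ℝ := fun p => if p.Prime then
    - k * (1 / (p : ℝ) + Real.log (1 - 1 / p)) + ((ω p : ℝ) / p + Real.log (1 - (ω p : ℝ) / p)) else 0
  have hr : Summable r := by
    have hs : Summable (fun n : ℕ => (2 * k + 2 * (B : ℝ) ^ 2) * (1 / (n : ℝ) ^ 2)) :=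
      (Real.summable_one_div_nat_pow.2 (by norm_num)).mul_left _
    refine Summable.of_norm_bounded_eventually_nat hs ?_
    filter_upwards [eventually_gt_atTop (M + 2 * B + 2)] with p hp
    by_cases hpp : p.Prime
    · simp only [r, if_pos hpp]
      have hp0 : (0 : ℝ) < p := by exact_mod_cast hpp.pos
      have hB : (ω p : ℝ) ≤ B := by exact_mod_cast hb p hpp (by omega)
      have hp2 : (2 : ℝ) * B + 2 ≤ p := by exact_mod_cast (by omega : 2 * B + 2 ≤ p)
      have hB0 : (0 : ℝ) ≤ B := by positivity
      have h1 := log_one_sub_bound (x := 1 / (p : ℝ)) (by positivity)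
        (by rw [div_le_iff₀ hp0]; linarith)
      have h2 := log_one_sub_bound (x := (ω p : ℝ) / p) (by positivity)
        (by rw [div_le_iff₀ hp0]; linarith)
      have h3 : ((ω p : ℝ) / p) ^ 2 ≤ (B : ℝ) ^ 2 * (1 / (p : ℝ) ^ 2) := by
        rw [div_pow, div_eq_mul_one_div]
        gcongr
      rw [Real.norm_eq_abs]
      refine (abs_add_le _ _).trans ?_
      rw [abs_mul, abs_neg, Nat.abs_cast]
      have h4 := mul_le_mul_of_nonneg_left h1 (Nat.cast_nonneg (α := ℝ) k)
      rw [one_div_pow] at h4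
      linarith
    · simp only [r, if_neg hpp, norm_zero]
      positivity
  have h1 := (hr.hasSum.tendsto_sum_nat.comp (tendsto_add_atTop_nat 1)).sub hL
  refine ⟨_, Real.exp_pos _, ((Real.continuous_exp.tendsto _).comp h1).congr fun N => ?_⟩
  simp only [Function.comp_apply, ← Finset.sum_sub_distrib]
  rw [Real.exp_sum, Finset.prod_filter]
  refine Finset.prod_congr rfl fun p _ => ?_
  by_cases hpp : p.Prime
  · simp only [r, if_pos hpp]
    have hp0 : (0 : ℝ) < p := by exact_mod_cast hpp.pos
    have a1 : (0 : ℝ) < 1 - 1 / (p : ℝ) := by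
      rw [sub_pos, div_lt_one hp0]
      exact_mod_cast hpp.one_lt
    have a2 : (0 : ℝ) < 1 - (ω p : ℝ) / (p : ℝ) := by
      rw [sub_pos, div_lt_one hp0]
      exact_mod_cast hlt p hpp
    have e : - k * (1 / (p : ℝ) + Real.log (1 - 1 / p))
        + ((ω p : ℝ) / p + Real.log (1 - (ω p : ℝ) / p)) - ((ω p : ℝ) - k) / p =
        Real.log ((1 - 1 / (p : ℝ))⁻¹ ^ k * (1 - (ω p : ℝ) / p)) := by
      rw [Real.log_mul (by positivity) a2.ne', Real.log_pow, Real.log_inv]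
      ring
    rw [e, Real.exp_log (by positivity)]
  · simp only [r, if_neg hpp, sub_zero, Real.exp_zero]

section Assembly
open Polynomial

theorem clear_denominators (u : ℚ[X]) :
    ∃ b : ℤ, b ≠ 0 ∧ ∃ U : ℤ[X], U.map (Int.castRingHom ℚ) = C (b : ℚ) * u := by
  induction u using Polynomial.induction_on' with
  | add q r hq hr =>
    obtain ⟨b, hb, U, hU⟩ := hq
    obtain ⟨b', hb', U', hU'⟩ := hr
    refine ⟨b * b', mul_ne_zero hb hb', C b' * U + C b * U', ?_⟩
    simp only [Polynomial.map_add, Polynomial.map_mul, hU, hU', map_C, Int.coe_castRingHom, Int.cast_mul,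
      C_mul]
    ring
  | monomial n a =>
    refine ⟨a.den, by exact_mod_cast a.den_ne_zero, monomial n a.num, ?_⟩
    rw [map_monomial, C_mul_monomial]
    congr 1
    have := Rat.mul_den_eq_num a
    push_cast
    rw [mul_comm, this]
    simp

theorem no_common_root (f g : ℤ[X]) (hf : Irreducible f) (hg : Irreducible g)
    (hfd : 1 ≤ f.natDegree) (hfg : ¬ Associated f g) :
    ∃ M : ℕ, ∀ p : ℕ, M < p → ∀ x : ℤ, (p : ℤ) ∣ f.eval x → (p : ℤ) ∣ g.eval x → False := by
  have hprim : f.IsPrimitive := hf.isPrimitive (by omega)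
  have hF := (IsPrimitive.Int.irreducible_iff_irreducible_map_cast hprim).1 hf
  have hnd : ¬ f.map (Int.castRingHom ℚ) ∣ g.map (Int.castRingHom ℚ) := by
    rw [← IsPrimitive.Int.dvd_iff_map_cast_dvd_map_cast f g hprim]
    intro h
    exact hfg (hf.associated_of_dvd hg h)
  obtain ⟨u, v, huv⟩ := (hF.coprime_iff_not_dvd).2 hnd
  obtain ⟨b, hb, U, hU⟩ := clear_denominators u
  obtain ⟨b', hb', V, hV⟩ := clear_denominators v
  have key : C b' * U * f + C b * V * g = C (b * b') := by
    apply map_injective (Int.castRingHom ℚ) Int.cast_injective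
    simp only [Polynomial.map_add, Polynomial.map_mul, hU, hV, map_C, Int.coe_castRingHom, Int.cast_mul,
      C_mul]
    linear_combination (C (b : ℚ) * C (b' : ℚ)) * huv
  refine ⟨(b * b').natAbs, fun p hp x h1 h2 => ?_⟩
  have := congrArg (eval x) key
  simp only [eval_add, eval_mul, eval_C] at this
  have hd : (p : ℤ) ∣ b * b' := by
    rw [← this]
    exact dvd_add (h1.mul_left _) (h2.mul_left _)
  have := Int.le_of_dvd (abs_pos.2 (mul_ne_zero hb hb')) ((dvd_abs _ _).2 hd)
  rw [Int.abs_eq_natAbs] at this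
  omega

end Assembly

/-- Convergence of the Bateman–Horn product: if `f₁, …, f_k ∈ ℤ[x]` are irreducible,
pairwise non-associated, and their product `f` does not vanish identically modulo any
prime, then `∏_p (1 − 1/p)^{−k} (1 − ω_f(p)/p)` converges to a positive limit. -/
theorem batemanHorn_product_converges (k : ℕ) (f : Fin k → Polynomial ℤ)
    (hirr : ∀ i, Irreducible (f i))
    (hassoc : ∀ i j, i ≠ j → ¬Associated (f i) (f j))
    (hnv : ∀ p : ℕ, p.Prime → ∃ n : ℤ, ¬(p : ℤ) ∣ (∏ i, f i).eval n) :
    ∃ L : ℝ, 0 < L ∧ Tendsto (fun N : ℕ =>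
        ∏ p ∈ (Finset.range (N + 1)).filter Nat.Prime,
          ((1 - 1 / (p : ℝ))⁻¹ ^ k *
            (1 - (((Finset.range p).filter
                fun x : ℕ => (p : ℤ) ∣ (∏ i, f i).eval (x : ℤ)).card : ℝ) / p)))
      atTop (nhds L) := by
  classical
  have hdeg : ∀ i, 1 ≤ (f i).natDegree := by
    intro i
    by_contra hd
    have h0 : (f i).natDegree = 0 := by omega
    obtain ⟨c, hc⟩ := Polynomial.natDegree_eq_zero.1 h0
    have hcu : c.natAbs ≠ 1 := by
      intro h
      apply (hirr i).not_isUnit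
      rw [← hc]
      exact (Int.isUnit_iff_natAbs_eq.2 h).map Polynomial.C
    obtain ⟨p, hp, hpc⟩ := Nat.exists_prime_and_dvd hcu
    obtain ⟨n, hn⟩ := hnv p hp
    apply hn
    rw [Polynomial.eval_prod]
    refine dvd_trans ?_ (Finset.dvd_prod_of_mem _ (Finset.mem_univ i))
    rw [← hc, Polynomial.eval_C]
    exact Int.natCast_dvd.2 hpc
  choose K hK1 hK2 M hM using fun i => exists_field (f i) (hirr i) (hdeg i)
  have hcop : ∀ i j, ∃ M : ℕ, i ≠ j → ∀ p : ℕ, M < p → ∀ x : ℤ, (p : ℤ) ∣ (f i).eval x →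
      (p : ℤ) ∣ (f j).eval x → False := by
    intro i j
    by_cases hij : i = j
    · exact ⟨0, fun h => absurd hij h⟩
    · obtain ⟨M, hM⟩ := no_common_root (f i) (f j) (hirr i) (hirr j) (hdeg i) (hassoc i j hij)
      exact ⟨M, fun _ => hM⟩
  choose R hR using hcop
  let T : ℕ := ∑ i, M i + ∑ i, ∑ j, R i j
  have hTM : ∀ i, M i ≤ T := fun i =>
    (Finset.single_le_sum (f := M) (fun _ _ => Nat.zero_le _) (Finset.mem_univ i)).trans
      (Nat.le_add_right _ _)
  have hTR : ∀ i j, R i j ≤ T := fun i j =>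
    ((Finset.single_le_sum (f := R i) (fun _ _ => Nat.zero_le _) (Finset.mem_univ j)).trans
      (Finset.single_le_sum (f := fun i => ∑ j, R i j) (fun _ _ => Nat.zero_le _)
        (Finset.mem_univ i))).trans (Nat.le_add_left _ _)
  let ω : ℕ → ℕ := fun p => ((Finset.range p).filter fun x : ℕ =>
            (p : ℤ) ∣ (∏ i, f i).eval (x : ℤ)).card
  have hω : ∀ p : ℕ, p.Prime → T < p → ω p = ∑ i, idealCount (K i) p := by
    intro p hp hT
    have e : ((Finset.range p).filter fun x : ℕ => (p : ℤ) ∣ (∏ i, f i).eval (x : ℤ)) =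
        Finset.univ.biUnion fun i =>
          ((Finset.range p).filter fun x : ℕ => (p : ℤ) ∣ (f i).eval (x : ℤ)) := by
      ext x
      simp only [Finset.mem_filter, Finset.mem_biUnion, Finset.mem_univ, true_and,
        Polynomial.eval_prod]
      rw [(Nat.prime_iff_prime_int.1 hp).dvd_finsetProd_iff]
      simp
    change Finset.card _ = _
    rw [e, Finset.card_biUnion]
    · exact Finset.sum_congr rfl fun i _ => hM i p (lt_of_le_of_lt (hTM i) hT) hp
    · intro i _ j _ hij
      change Disjoint _ _
      rw [Finset.disjoint_left]
      intro x hx hy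
      exact hR i j hij p (lt_of_le_of_lt (hTR i j) hT) x (Finset.mem_filter.1 hx).2
        (Finset.mem_filter.1 hy).2
  have hlt : ∀ p : ℕ, p.Prime → ω p < p := by
    intro p hp
    have hsub : ((Finset.range p).filter fun x : ℕ => (p : ℤ) ∣ (∏ i, f i).eval (x : ℤ)) ⊂
        Finset.range p := by
      rw [Finset.filter_ssubset]
      obtain ⟨n, hn⟩ := hnv p hp
      have hp0 : (0 : ℤ) < p := by exact_mod_cast hp.pos
      have h1 := Int.emod_nonneg n hp0.ne'
      have h2 := Int.emod_lt_of_pos n hp0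
      refine ⟨(n % p).toNat, by rw [Finset.mem_range]; omega, fun h => hn ?_⟩
      rw [Int.toNat_of_nonneg h1] at h
      have h3 : n - n % p ∣ (∏ i, f i).eval n - (∏ i, f i).eval (n % p) :=
        Polynomial.sub_dvd_eval_sub _ _ _
      have h4 : (p : ℤ) ∣ n - n % p := Int.dvd_self_sub_emod
      exact (dvd_sub_left h).1 (h4.trans h3)
    simpa using Finset.card_lt_card hsub
  refine product_of_sum k ω (∑ i, 2 ^ Module.finrank ℤ (NumberField.RingOfIntegers (K i))) T hlt ?_ ?_
  · intro p hp hT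
    rw [hω p hp hT]
    refine Finset.sum_le_sum fun i _ => ?_
    have := idealCount_pow_le (K i) p 1 hp
    simpa using this
  · refine sum_conv_of_eventually_eq
      (fun n => ∑ i, if n.Prime then ((idealCount (K i) n : ℝ) - 1) / n else 0) _ T ?_ ?_
    · intro n hn
      by_cases hp : n.Prime
      · simp only [if_pos hp]
        rw [hω n hp hn, ← Finset.sum_div, Finset.sum_sub_distrib]
        simp
      · simp [if_neg hp]
    · choose L hL using fun i => idealCount_sum_converges (K i)
      refine ⟨∑ i, L i, (tendsto_finsetSum Finset.univ fun i _ => hL i).congr fun N => ?_⟩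
      rw [Finset.sum_comm]
end

section
/- If f ∈ ℤ[x] is nonconstant and f(n) is a prime number for infinitely many natural numbers n, then f is irreducible in ℤ[x]; that is, f cannot be written as a product of two polynomials in ℤ[x], neither of which is ±1. -/
lemma isUnit_of_infinite_unit_values (g : Polynomial ℤ)
    (h : {n : ℕ | IsUnit (g.eval (n : ℤ))}.Infinite) : IsUnit g := by
  have h0 : (g - 1) * (g + 1) = 0 := by
    apply Polynomial.eq_zero_of_infinite_isRoot
    refine (h.image (f := fun n : ℕ => (n : ℤ)) (Nat.cast_injective.injOn)).mono ?_
    rintro _ ⟨n, hn, rfl⟩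
    have hn' : IsUnit (g.eval (n : ℤ)) := hn
    rcases Int.isUnit_iff.mp hn' with h1 | h1 <;> simp [Polynomial.IsRoot, h1]
  rcases mul_eq_zero.mp h0 with h1 | h1
  · rw [sub_eq_zero.mp h1]
    exact isUnit_one
  · rw [eq_neg_of_add_eq_zero_left h1]
    exact isUnit_one.neg

/-- If `f ∈ ℤ[x]` is nonconstant and `f(n)` is a (positive) prime for infinitely
many natural numbers `n`, then `f` is irreducible in `ℤ[x]`. -/
theorem irreducible_of_infinitely_many_prime_values (f : Polynomial ℤ)
    (hf : 0 < f.natDegree)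
    (hprime : {n : ℕ | 0 < f.eval (n : ℤ) ∧ Prime (f.eval (n : ℤ))}.Infinite) :
    Irreducible f := by
  refine ⟨fun hu => ?_, fun g h hgh => ?_⟩
  · have := Polynomial.natDegree_eq_zero_of_isUnit hu
    omega
  · have hsub : {n : ℕ | 0 < f.eval (n : ℤ) ∧ Prime (f.eval (n : ℤ))} ⊆
        {n : ℕ | IsUnit (g.eval (n : ℤ))} ∪ {n : ℕ | IsUnit (h.eval (n : ℤ))} := by
      rintro n ⟨-, hn⟩
      exact hn.irreducible.isUnit_or_isUnit (by rw [hgh, Polynomial.eval_mul])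
    rcases Set.infinite_union.mp (hprime.mono hsub) with h1 | h1
    · exact Or.inl (isUnit_of_infinite_unit_values g h1)
    · exact Or.inr (isUnit_of_infinite_unit_values h h1)
end
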